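/- Let r and m be positive integers and let Γ(r,m) = { [[a,b],[c,d]] ∈ SL₂(ℤ) : a ≡ 1, d ≡ 1, c ≡ 0 (mod r) and cm ≡ 0 (mod r²) }. For every γ = [[a,b],[c,d]] ∈ SL₂(ℤ) with a ≡ d ≡ 1 and b ≡ c ≡ 0 (mod r), the conjugate [[1,0],[0,r]]·γ·[[1,0],[0,r]]⁻¹ = [[a, b/r],[cr, d]] is an integer matrix lying in Γ(r,m). Consequently [SL₂(ℤ) : Γ(r,m)] ≤ r³·Π_{p | r, p prime}(1 − 1/p²). -/

import Mathlib

/-- The group `Γ(r,m) = { [[a,b],[c,d]] ∈ SL₂(ℤ) : a ≡ 1, d ≡ 1, c ≡ 0 (mod r),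
cm ≡ 0 (mod r²) }`. -/
def GammaRM (r m : ℤ) : Subgroup (Matrix.SpecialLinearGroup (Fin 2) ℤ) where
  carrier := {γ | γ 0 0 ≡ 1 [ZMOD r] ∧ γ 1 1 ≡ 1 [ZMOD r] ∧
    γ 1 0 ≡ 0 [ZMOD r] ∧ γ 1 0 * m ≡ 0 [ZMOD r ^ 2]}
  one_mem' := by
    refine ⟨?_, ?_, ?_, ?_⟩ <;> simp
  mul_mem' := by
    rintro A B ⟨hA1, hA2, hA3, hA4⟩ ⟨hB1, hB2, hB3, hB4⟩
    have hAB : ∀ i j : Fin 2, (A * B) i j = A i 0 * B 0 j + A i 1 * B 1 j := by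
      intro i j
      simp [Matrix.SpecialLinearGroup.coe_mul, Matrix.mul_apply, Fin.sum_univ_two]
    refine ⟨?_, ?_, ?_, ?_⟩
    · rw [hAB]
      calc A 0 0 * B 0 0 + A 0 1 * B 1 0
          ≡ 1 * 1 + A 0 1 * 0 [ZMOD r] := (hA1.mul hB1).add (Int.ModEq.mul_left _ hB3)
        _ = 1 := by ring
    · rw [hAB]
      calc A 1 0 * B 0 1 + A 1 1 * B 1 1
          ≡ 0 * B 0 1 + 1 * 1 [ZMOD r] := (Int.ModEq.mul_right _ hA3).add (hA2.mul hB2)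
        _ = 1 := by ring
    · rw [hAB]
      calc A 1 0 * B 0 0 + A 1 1 * B 1 0
          ≡ 0 * B 0 0 + A 1 1 * 0 [ZMOD r] :=
            (Int.ModEq.mul_right _ hA3).add (Int.ModEq.mul_left _ hB3)
        _ = 0 := by ring
    · rw [hAB]
      have h4 : (A 1 0 * B 0 0 + A 1 1 * B 1 0) * m
          = (A 1 0 * m) * B 0 0 + A 1 1 * (B 1 0 * m) := by ring
      rw [h4]
      have hA4' : r ^ 2 ∣ A 1 0 * m := (Int.modEq_zero_iff_dvd).mp hA4
      have hB4' : r ^ 2 ∣ B 1 0 * m := (Int.modEq_zero_iff_dvd).mp hB4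
      exact (Int.modEq_zero_iff_dvd).mpr
        (dvd_add (hA4'.mul_right _) (hB4'.mul_left _))
  inv_mem' := by
    rintro A ⟨hA1, hA2, hA3, hA4⟩
    have hinv : ∀ i j : Fin 2,
        A⁻¹ i j = (!![A 1 1, -A 0 1; -A 1 0, A 0 0] : Matrix (Fin 2) (Fin 2) ℤ) i j := by
      intro i j
      rw [Matrix.SpecialLinearGroup.SL2_inv_expl A]
      simp [Matrix.etaExpand_eq]
    refine ⟨?_, ?_, ?_, ?_⟩
    · rw [hinv]; simpa using hA2
    · rw [hinv]; simpa using hA1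
    · rw [hinv]
      simpa using hA3.neg
    · rw [hinv]
      have he : (!![A 1 1, -A 0 1; -A 1 0, A 0 0] : Matrix (Fin 2) (Fin 2) ℤ) 1 0 = -A 1 0 := by
        simp
      rw [he]
      calc (-(A 1 0)) * m = -(A 1 0 * m) := by ring
        _ ≡ -0 [ZMOD r ^ 2] := hA4.neg
        _ = 0 := by ring

/-!
Conjugation by `diag(1, r)` is an isomorphism from `Γ⁰(r) = {b ≡ 0}` onto `Γ₀(r) = {c ≡ 0}`. These
two groups are already conjugate inside `SL₂(ℤ)`, so they have the same index, and therefore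
conjugation by `diag(1, r)` preserves the index in `SL₂(ℤ)` of every subgroup of `Γ⁰(r)`. It carries
`Γ(r)` into `Γ(r,m)`, whence `[SL₂(ℤ) : Γ(r,m)] ≤ [SL₂(ℤ) : Γ(r)] ≤ |SL₂(ℤ/r)|`. A matrix in `SL₂`
of a ring is a unimodular first column together with a free ring element, and unimodular pairs over
`ℤ/r` are counted one prime power at a time.
-/

open CongruenceSubgroup MatrixGroups

section CoprimePairs

/-- The unimodular vectors of rank two over `R`, i.e. the possible columns of a matrix
in `SL(2, R)`. -/
abbrev CoprimePair (R : Type*) [CommSemiring R] : Type _ :=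
  {v : R × R // IsCoprime v.1 v.2}

theorem isCoprime_prod_iff {R S : Type*} [CommSemiring R] [CommSemiring S] {x y : R × S} :
    IsCoprime x y ↔ IsCoprime x.1 y.1 ∧ IsCoprime x.2 y.2 := by
  refine ⟨fun h ↦ ⟨h.map (RingHom.fst R S), h.map (RingHom.snd R S)⟩, ?_⟩
  rintro ⟨⟨a, b, hab⟩, ⟨c, d, hcd⟩⟩
  exact ⟨(a, c), (b, d), Prod.ext hab hcd⟩

theorem card_coprimePair_prod (R S : Type*) [CommSemiring R] [CommSemiring S] :
    Nat.card (CoprimePair (R × S)) = Nat.card (CoprimePair R) * Nat.card (CoprimePair S) := by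
  rw [← Nat.card_prod]
  exact Nat.card_congr <| ((Equiv.prodProdProdComm R S R S).subtypeEquiv
    fun _ ↦ isCoprime_prod_iff).trans (Equiv.subtypeProdEquivProd (p := fun v : R × R ↦
      IsCoprime v.1 v.2) (q := fun v : S × S ↦ IsCoprime v.1 v.2))

theorem card_coprimePair_congr {R S : Type*} [CommSemiring R] [CommSemiring S] (e : R ≃+* S) :
    Nat.card (CoprimePair R) = Nat.card (CoprimePair S) :=
  Nat.card_congr <| (e.toEquiv.prodCongr e.toEquiv).subtypeEquiv fun v ↦
    ⟨fun h ↦ h.map e.toRingHom, fun h ↦ by simpa using h.map e.symm.toRingHom⟩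

theorem isCoprime_iff_isUnit_or_isUnit {R : Type*} [CommSemiring R] [IsLocalRing R] {x y : R} :
    IsCoprime x y ↔ IsUnit x ∨ IsUnit y := by
  constructor
  · rintro ⟨a, b, hab⟩
    exact (IsLocalRing.isUnit_or_isUnit_of_add_one hab).imp
      isUnit_of_mul_isUnit_right isUnit_of_mul_isUnit_right
  · rintro (hx | hy)
    · exact (isCoprime_zero_right.2 hx).of_isCoprime_of_dvd_right (dvd_zero y)
    · exact (isCoprime_zero_left.2 hy).of_isCoprime_of_dvd_left (dvd_zero x)

theorem card_units_add_card_nonunits (M : Type*) [Monoid M] [Finite M] :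
    Nat.card Mˣ + Nat.card (nonunits M) = Nat.card M := by
  classical
  rw [Nat.card_congr Submonoid.unitsTypeEquivIsUnitSubmonoid.toEquiv, ← Nat.card_sum]
  exact Nat.card_congr (Equiv.sumCompl IsUnit)

theorem card_coprimePair_add_card_nonunits_sq (R : Type*) [CommSemiring R] [IsLocalRing R]
    [Finite R] :
    Nat.card (CoprimePair R) + Nat.card (nonunits R) ^ 2 = Nat.card R ^ 2 := by
  have nonunit_pairs : Nat.card {v : R × R // ¬ IsCoprime v.1 v.2} = Nat.card (nonunits R) ^ 2 := by
    rw [sq, ← Nat.card_prod]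
    refine Nat.card_congr <| (Equiv.subtypeEquivRight fun v ↦ ?_).trans
      (Equiv.subtypeProdEquivProd (p := (· ∈ nonunits R)) (q := (· ∈ nonunits R)))
    rw [isCoprime_iff_isUnit_or_isUnit, not_or, mem_nonunits_iff, mem_nonunits_iff]
  classical
  rw [← nonunit_pairs, ← Nat.card_sum, Nat.card_congr (Equiv.sumCompl _), Nat.card_prod, sq]

end CoprimePairs

section ZMod

theorem isLocalRing_zmod_prime_pow {p k : ℕ} (hp : p.Prime) (hk : k ≠ 0) :
    IsLocalRing (ZMod (p ^ k)) := by
  have : Fact p.Prime := ⟨hp⟩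
  have : Fact (1 < p ^ k) := ⟨Nat.one_lt_pow hk hp.one_lt⟩
  exact IsLocalRing.of_surjective' (PadicInt.toZModPow (p := p) k) (ZMod.ringHom_surjective _)

theorem card_nonunits_zmod_prime_pow {p k : ℕ} (hp : p.Prime) (hk : k ≠ 0) :
    Nat.card (nonunits (ZMod (p ^ k))) = p ^ (k - 1) := by
  have : NeZero (p ^ k) := ⟨pow_ne_zero k hp.ne_zero⟩
  have count := card_units_add_card_nonunits (ZMod (p ^ k))
  rw [Nat.card_eq_fintype_card, ZMod.card_units_eq_totient, Nat.card_zmod] at count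
  refine Nat.add_left_cancel (count.trans ?_)
  rw [Nat.totient_prime_pow hp (Nat.pos_of_ne_zero hk), ← mul_add_one,
    Nat.sub_add_cancel hp.one_le, pow_sub_one_mul hk]

variable {K : Type*} [Field K] [CharZero K]

theorem card_coprimePair_zmod_prime_pow {p k : ℕ} (hp : p.Prime) (hk : k ≠ 0) :
    (Nat.card (CoprimePair (ZMod (p ^ k))) : K) = ((p : K) ^ k) ^ 2 * (1 - 1 / (p : K) ^ 2) := by
  have := isLocalRing_zmod_prime_pow hp hk
  have : NeZero (p ^ k) := ⟨pow_ne_zero k hp.ne_zero⟩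
  have hp0 : (p : K) ≠ 0 := mod_cast hp.ne_zero
  have count := card_coprimePair_add_card_nonunits_sq (ZMod (p ^ k))
  rw [card_nonunits_zmod_prime_pow hp hk, Nat.card_zmod] at count
  have count_cast : (Nat.card (CoprimePair (ZMod (p ^ k))) : K) + ((p : K) ^ (k - 1)) ^ 2
      = ((p : K) ^ k) ^ 2 := mod_cast count
  rw [eq_sub_of_add_eq count_cast, ← pow_sub_one_mul hk (p : K)]
  field_simp

theorem card_coprimePair_zmod {n : ℕ} (hn : n ≠ 0) :
    (Nat.card (CoprimePair (ZMod n)) : K)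
      = (n : K) ^ 2 * ∏ p ∈ n.primeFactors, (1 - 1 / (p : K) ^ 2) := by
  have mul_of_coprime (a b : ℕ) (hab : a.Coprime b) :
      (Nat.card (CoprimePair (ZMod (a * b))) : K)
        = Nat.card (CoprimePair (ZMod a)) * Nat.card (CoprimePair (ZMod b)) := by
    rw [card_coprimePair_congr (ZMod.chineseRemainder hab), card_coprimePair_prod, Nat.cast_mul]
  have card_one : (Nat.card (CoprimePair (ZMod 1)) : K) = 1 := by
    have : Nonempty (CoprimePair (ZMod 1)) := ⟨⟨(1, 1), isCoprime_one_left⟩⟩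
    rw [Nat.card_unique, Nat.cast_one]
  calc (Nat.card (CoprimePair (ZMod n)) : K)
      = ∏ p ∈ n.primeFactors, (Nat.card (CoprimePair (ZMod (p ^ n.factorization p))) : K) :=
        Nat.multiplicative_factorization (fun a ↦ (Nat.card (CoprimePair (ZMod a)) : K))
          mul_of_coprime card_one hn
    _ = ∏ p ∈ n.primeFactors, ((p : K) ^ n.factorization p) ^ 2 * (1 - 1 / (p : K) ^ 2) :=
        Finset.prod_congr rfl fun p hp ↦ card_coprimePair_zmod_prime_pow
          (Nat.prime_of_mem_primeFactors hp) (Finsupp.mem_support_iff.1 hp)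
    _ = (n : K) ^ 2 * ∏ p ∈ n.primeFactors, (1 - 1 / (p : K) ^ 2) := by
        have factorization : ∏ p ∈ n.primeFactors, (p : K) ^ n.factorization p = n :=
          mod_cast Nat.prod_factorization_pow_eq_self hn
        rw [Finset.prod_mul_distrib, Finset.prod_pow, factorization]

end ZMod

section SpecialLinearGroup

theorem det_eq_one_fin_two {R : Type*} [CommRing R] (A : SL(2, R)) :
    A 0 0 * A 1 1 - A 0 1 * A 1 0 = 1 := by
  rw [← Matrix.det_fin_two, A.det_coe]

theorem SL2_mul_apply {R : Type*} [CommRing R] (A B : SL(2, R)) (i j : Fin 2) :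
    (A * B) i j = A i 0 * B 0 j + A i 1 * B 1 j := by
  rw [Matrix.SpecialLinearGroup.coe_mul, Matrix.mul_apply, Fin.sum_univ_two]

/-- The first column of a matrix in `SL(2, R)`, as a unimodular vector. -/
def firstCol {R : Type*} [CommRing R] (A : SL(2, R)) : CoprimePair R :=
  ⟨(A 0 0, A 1 0), A.isCoprime_col 0⟩

theorem card_SL2 (R : Type*) [CommRing R] :
    Nat.card SL(2, R) = Nat.card (CoprimePair R) * Nat.card R := by
  -- If `u a + w c = 1`, then `(-w, u)` completes the column `(a, c)` to a matrix in `SL(2, R)`,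
  -- and the other completions are `(-w, u) + t (a, c)`.
  choose u w huw using fun v : CoprimePair R ↦ v.2
  rw [← Nat.card_prod]
  exact Nat.card_congr
    { toFun A := (firstCol A, u (firstCol A) * A 0 1 + w (firstCol A) * A 1 1)
      invFun := fun (v, t) ↦ ⟨!![v.1.1, -w v + t * v.1.1; v.1.2, u v + t * v.1.2], by
        rw [Matrix.det_fin_two_of]
        linear_combination huw v⟩
      left_inv A := by
        have hcol : u (firstCol A) * A 0 0 + w (firstCol A) * A 1 0 = 1 := huw (firstCol A)
        have hdet := det_eq_one_fin_two A
        ext i j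
        fin_cases i <;> fin_cases j
        · rfl
        · change -w (firstCol A) + (_ + _) * A 0 0 = A 0 1
          linear_combination A 0 1 * hcol + w (firstCol A) * hdet
        · rfl
        · change u (firstCol A) + (_ + _) * A 1 0 = A 1 1
          linear_combination A 1 1 * hcol - u (firstCol A) * hdet
      right_inv := fun (v, t) ↦ by
        refine Prod.ext rfl ?_
        change u v * (-w v + t * v.1.1) + w v * (u v + t * v.1.2) = t
        linear_combination t * huw v }

theorem index_Gamma_le_card_SL2 (N : ℕ) [NeZero N] :
    (Gamma N).index ≤ Nat.card SL(2, ZMod N) := by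
  rw [Gamma, Subgroup.index_ker]
  exact Subgroup.card_le_card_group _

end SpecialLinearGroup

section DiagonalConjugation

theorem index_map_subgroupOf {G G' : Type*} [Group G] [Group G'] {H L : Subgroup G} (hHL : H ≤ L)
    {f : L →* G'} (hf : Function.Injective f) (hrange : f.range.index = L.index) :
    ((H.subgroupOf L).map f).index = H.index := by
  rw [Subgroup.index_map_of_injective _ hf, hrange]
  exact Subgroup.relIndex_mul_index hHL

variable {N : ℕ}

theorem mem_Gamma0_iff_dvd {γ : SL(2, ℤ)} : γ ∈ Gamma0 N ↔ (N : ℤ) ∣ γ 1 0 := by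
  rw [Gamma0_mem, ZMod.intCast_zmod_eq_zero_iff_dvd]

variable (N) in
/-- The group usually written `Γ⁰(N)`: the matrices in `SL(2, ℤ)` with upper right entry divisible
by `N`, obtained from `Γ₀(N)` by conjugation by `S`. -/
def GammaUpper0 : Subgroup SL(2, ℤ) :=
  (Gamma0 N).comap (MulAut.conj ModularGroup.S).toMonoidHom

theorem mem_GammaUpper0 {γ : SL(2, ℤ)} : γ ∈ GammaUpper0 N ↔ (N : ℤ) ∣ γ 0 1 := by
  have conj_S_apply : (ModularGroup.S * γ * ModularGroup.S⁻¹) 1 0 = -γ 0 1 := by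
    simp only [SL2_mul_apply, Matrix.SpecialLinearGroup.coe_inv, Matrix.adjugate_fin_two,
      ModularGroup.coe_S]
    simp
  rw [← dvd_neg, ← conj_S_apply]
  exact mem_Gamma0_iff_dvd

theorem index_GammaUpper0 : (GammaUpper0 N).index = (Gamma0 N).index :=
  Subgroup.index_comap_of_surjective _ (MulAut.conj ModularGroup.S).surjective

theorem Gamma_le_GammaUpper0 : Gamma N ≤ GammaUpper0 N := fun _ hγ ↦
  mem_GammaUpper0.2 <| (ZMod.intCast_zmod_eq_zero_iff_dvd _ _).1 (Gamma_mem.1 hγ).2.1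

variable (N) in
/-- Conjugation by `diag(1, N)`, that is `(a, b; c, d) ↦ (a, b / N; c N, d)`, as a homomorphism
on `Γ⁰(N)`, where the division is exact. -/
def diagConj : GammaUpper0 N →* SL(2, ℤ) where
  toFun γ := ⟨!![γ.1 0 0, γ.1 0 1 / N; γ.1 1 0 * N, γ.1 1 1], by
    rw [Matrix.det_fin_two_of]
    linear_combination det_eq_one_fin_two γ.1
      - γ.1 1 0 * Int.ediv_mul_cancel (mem_GammaUpper0.1 γ.2)⟩
  map_one' := by
    ext i j
    fin_cases i <;> fin_cases j <;> simp
  map_mul' γ δ := by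
    have hγ := mem_GammaUpper0.1 γ.2
    have hδ := mem_GammaUpper0.1 δ.2
    ext i j
    refine Eq.trans ?_ (SL2_mul_apply _ _ i j).symm
    fin_cases i <;> fin_cases j
    · change (γ.1 * δ.1) 0 0 = γ.1 0 0 * δ.1 0 0 + γ.1 0 1 / N * (δ.1 1 0 * N)
      rw [SL2_mul_apply]
      linear_combination -δ.1 1 0 * Int.ediv_mul_cancel hγ
    · change (γ.1 * δ.1) 0 1 / N = γ.1 0 0 * (δ.1 0 1 / N) + γ.1 0 1 / N * δ.1 1 1
      rw [SL2_mul_apply, Int.add_ediv_of_dvd_left (hδ.mul_left _), Int.mul_ediv_assoc _ hδ,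
        Int.mul_ediv_assoc' _ hγ]
    · change (γ.1 * δ.1) 1 0 * N = γ.1 1 0 * N * δ.1 0 0 + γ.1 1 1 * (δ.1 1 0 * N)
      rw [SL2_mul_apply]
      ring
    · change (γ.1 * δ.1) 1 1 = γ.1 1 0 * N * (δ.1 0 1 / N) + γ.1 1 1 * δ.1 1 1
      rw [SL2_mul_apply]
      linear_combination -γ.1 1 0 * Int.ediv_mul_cancel hδ

theorem diagConj_injective [NeZero N] : Function.Injective (diagConj N) := by
  have hN : (N : ℤ) ≠ 0 := mod_cast NeZero.ne N
  intro γ δ h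
  have entry (i j) : diagConj N γ i j = diagConj N δ i j := by rw [h]
  ext i j
  fin_cases i <;> fin_cases j
  · exact entry 0 0
  · exact (Int.ediv_left_inj (mem_GammaUpper0.1 γ.2) (mem_GammaUpper0.1 δ.2)).1 (entry 0 1)
  · exact mul_right_cancel₀ hN (entry 1 0)
  · exact entry 1 1

theorem range_diagConj [NeZero N] : (diagConj N).range = Gamma0 N := by
  refine le_antisymm ?_ fun A hA ↦ ?_
  · rintro _ ⟨γ, rfl⟩
    exact mem_Gamma0_iff_dvd.2 (dvd_mul_left _ _)
  · have hc := Int.ediv_mul_cancel (mem_Gamma0_iff_dvd.1 hA)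
    let γ : SL(2, ℤ) := ⟨!![A 0 0, A 0 1 * N; A 1 0 / N, A 1 1], by
      rw [Matrix.det_fin_two_of]
      linear_combination det_eq_one_fin_two A - A 0 1 * hc⟩
    refine ⟨⟨γ, mem_GammaUpper0.2 (dvd_mul_left _ _)⟩, ?_⟩
    ext i j
    fin_cases i <;> fin_cases j
    · rfl
    · exact Int.mul_ediv_cancel _ (mod_cast NeZero.ne N)
    · exact hc
    · rfl

theorem mem_Gamma_iff_modEq {γ : SL(2, ℤ)} : γ ∈ Gamma N ↔ γ 0 0 ≡ 1 [ZMOD N] ∧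
    γ 0 1 ≡ 0 [ZMOD N] ∧ γ 1 0 ≡ 0 [ZMOD N] ∧ γ 1 1 ≡ 1 [ZMOD N] := by
  simp [← ZMod.intCast_eq_intCast_iff]

theorem diagConj_mem_GammaRM (m : ℤ) {γ : GammaUpper0 N} (hγ : γ.1 ∈ Gamma N) :
    diagConj N γ ∈ GammaRM N m := by
  obtain ⟨ha, -, hc, hd⟩ := mem_Gamma_iff_modEq.1 hγ
  have hc_sq : (N : ℤ) ^ 2 ∣ γ.1 1 0 * N := by
    rw [sq]
    exact mul_dvd_mul_right (Int.modEq_zero_iff_dvd.1 hc) _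
  exact ⟨ha, hd, Int.modEq_zero_iff_dvd.2 (dvd_mul_left _ _),
    Int.modEq_zero_iff_dvd.2 (hc_sq.mul_right m)⟩

variable (N) in
theorem index_GammaRM_le_index_Gamma [NeZero N] (m : ℤ) :
    (GammaRM N m).index ≤ (Gamma N).index := by
  set Γ' := ((Gamma N).subgroupOf (GammaUpper0 N)).map (diagConj N)
  have index_eq : Γ'.index = (Gamma N).index :=
    index_map_subgroupOf Gamma_le_GammaUpper0 diagConj_injective
      (by rw [range_diagConj, index_GammaUpper0])
  have le_GammaRM : Γ' ≤ GammaRM N m :=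
    Subgroup.map_le_iff_le_comap.2 fun _ hγ ↦ diagConj_mem_GammaRM m hγ
  have : Γ'.FiniteIndex := ⟨index_eq ▸ Subgroup.FiniteIndex.index_ne_zero⟩
  exact index_eq ▸ Subgroup.index_antitone le_GammaRM

end DiagonalConjugation

/-- for positive integers `r, m`, every `γ ∈ SL₂(ℤ)` with
`a ≡ d ≡ 1` and `b ≡ c ≡ 0 (mod r)` has its conjugate
`[[1,0],[0,r]]·γ·[[1,0],[0,r]]⁻¹ = [[a, b/r],[cr, d]]` an integer matrix lying in
`Γ(r,m)`; consequently `[SL₂(ℤ) : Γ(r,m)] ≤ r³·Π_{p ∣ r prime}(1 − 1/p²)`. -/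
theorem stmt_16 (r m : ℤ) (hr : 0 < r) (hm : 0 < m) :
    (∀ γ : Matrix.SpecialLinearGroup (Fin 2) ℤ,
      γ 0 0 ≡ 1 [ZMOD r] → γ 1 1 ≡ 1 [ZMOD r] →
      γ 0 1 ≡ 0 [ZMOD r] → γ 1 0 ≡ 0 [ZMOD r] →
      ∃ γ' : Matrix.SpecialLinearGroup (Fin 2) ℤ, γ' ∈ GammaRM r m ∧
        γ' 0 0 = γ 0 0 ∧ γ' 0 1 = γ 0 1 / r ∧ γ' 1 0 = γ 1 0 * r ∧ γ' 1 1 = γ 1 1) ∧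
    ((GammaRM r m).index : ℝ) ≤
      (r : ℝ) ^ 3 * ∏ p ∈ r.natAbs.primeFactors, (1 - 1 / (p : ℝ) ^ 2) := by
  lift r to ℕ using hr.le with N
  have : NeZero N := ⟨by rintro rfl; exact hr.false⟩
  refine ⟨fun γ ha hd hb hc ↦ ?_, ?_⟩
  · have hγ : γ ∈ Gamma N := mem_Gamma_iff_modEq.2 ⟨ha, hb, hc, hd⟩
    exact ⟨diagConj N ⟨γ, Gamma_le_GammaUpper0 hγ⟩, diagConj_mem_GammaRM m hγ, rfl, rfl, rfl, rfl⟩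
  · calc ((GammaRM N m).index : ℝ)
        ≤ Nat.card SL(2, ZMod N) :=
          mod_cast (index_GammaRM_le_index_Gamma N m).trans (index_Gamma_le_card_SL2 N)
      _ = (N : ℝ) ^ 2 * (∏ p ∈ N.primeFactors, (1 - 1 / (p : ℝ) ^ 2)) * N := by
          rw [card_SL2, Nat.cast_mul, card_coprimePair_zmod (NeZero.ne N), Nat.card_zmod]
      _ = ((N : ℤ) : ℝ) ^ 3 * ∏ p ∈ (N : ℤ).natAbs.primeFactors, (1 - 1 / (p : ℝ) ^ 2) := by
          rw [Int.natAbs_natCast, Int.cast_natCast]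
          ring
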